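/- Limiting absorption for H(𝔢,V): Let d ≥ 3 and let 𝔢 be a dispersion relation of class C³ satisfying condition (M). There exists a constant c(𝔢) > 0, depending only on 𝔢, such that for every potential V : Γ → ℝ with Φ_{2,2}(V) < c(𝔢) there is a constant c′ < ∞ with |⟨δ_x, (z − H(𝔢,V))^{−1} δ_y⟩| ≤ c′·(1+|x|)²·(1+|y|)² for all z ∈ ℂ∖ℝ and all x, y ∈ Γ. -/

import Mathlib

open MeasureTheory Complex Real
open scoped ENNReal

noncomputable section

namespace LatSch

/-- The lattice `Γ = ℤ^d`. -/
abbrev Γd (d : ℕ) := Fin d → ℤ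

/-- The Hilbert space `ℓ²(Γ)`. -/
abbrev L2 (d : ℕ) := lp (fun _ : Γd d => ℂ) 2

/-- Euclidean norm of a lattice point. -/
def lnorm {d : ℕ} (x : Γd d) : ℝ := Real.sqrt (∑ i, ((x i : ℝ)) ^ 2)

/-- The standard basis vector `δ_x` of `ℓ²(Γ)`. -/
def delta {d : ℕ} (x : Γd d) : L2 d := lp.single 2 x 1

local notation "⟪" a ", " b "⟫" => @inner ℂ _ _ a b

/-- The cube `[-π, π]^d`, a fundamental domain of the torus. -/
def torusBox (d : ℕ) : Set (Fin d → ℝ) := Set.univ.pi fun _ => Set.Icc (-π) π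

/-- `⟨p, m⟩` for `p ∈ ℝ^d`, `m ∈ ℤ^d`. -/
def dotZ {d : ℕ} (p : Fin d → ℝ) (m : Γd d) : ℝ := ∑ i, p i * (m i : ℝ)

/-- Fourier coefficient `f̂(m) = (2π)^{-d} ∫_{[-π,π]^d} f(p) e^{i⟨p,m⟩} dp`. -/
def fCoeff {d : ℕ} (f : (Fin d → ℝ) → ℝ) (m : Γd d) : ℂ :=
  ((1 / (2 * π) ^ d : ℝ) : ℂ) *
    ∫ p in torusBox d, (f p : ℂ) * Complex.exp (Complex.I * (dotZ p m : ℝ))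

/-- `H` is the Fourier multiplier (hopping matrix) `h(f)`, characterized by its
matrix elements `⟨δ_x, H δ_y⟩ = f̂(x - y)`. -/
def IsMultiplier {d : ℕ} (f : (Fin d → ℝ) → ℝ) (H : L2 d →L[ℂ] L2 d) : Prop :=
  ∀ x y : Γd d, ⟪delta x, H (delta y)⟫ = fCoeff f (x - y)

/-- `M` is the operator of multiplication by the potential `V`. -/
def IsMulOp {d : ℕ} (V : Γd d → ℝ) (M : L2 d →L[ℂ] L2 d) : Prop :=
  ∀ (ψ : L2 d) (x : Γd d), (M ψ : ∀ _ : Γd d, ℂ) x = (V x : ℂ) * (ψ : ∀ _ : Γd d, ℂ) x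

/-- Partial derivative `∂_{p_k} f (p)`. -/
def pd {d : ℕ} (f : (Fin d → ℝ) → ℝ) (k : Fin d) (p : Fin d → ℝ) : ℝ :=
  fderiv ℝ f p (Pi.single k 1)

/-- `|∇f|²(p) = Σ_k (∂_{p_k} f(p))²`. -/
def gradSq {d : ℕ} (f : (Fin d → ℝ) → ℝ) (p : Fin d → ℝ) : ℝ := ∑ k, pd f k p ^ 2

/-- The Hessian matrix of `f` at `p`. -/
def hess {d : ℕ} (f : (Fin d → ℝ) → ℝ) (p : Fin d → ℝ) : Matrix (Fin d) (Fin d) ℝ :=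
  Matrix.of fun i j => fderiv ℝ (fun q => fderiv ℝ f q (Pi.single j 1)) p (Pi.single i 1)

/-- All critical points of `f` are nondegenerate (`f` is a Morse function). -/
def IsMorse {d : ℕ} (f : (Fin d → ℝ) → ℝ) : Prop :=
  ∀ p, fderiv ℝ f p = 0 → (hess f p).det ≠ 0

/-- `2πℤ^d`-periodicity. -/
def Periodic2pi {d : ℕ} (f : (Fin d → ℝ) → ℝ) : Prop :=
  ∀ (p : Fin d → ℝ) (m : Γd d), f (p + fun i => 2 * π * (m i : ℝ)) = f p

/-- A dispersion relation: a `2πℤ^d`-periodic function with minimum `0`. -/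
def IsDispersion {d : ℕ} (f : (Fin d → ℝ) → ℝ) : Prop :=
  Periodic2pi f ∧ (∀ p, 0 ≤ f p) ∧ (∃ p, f p = 0)

/-- Condition (M): `𝔢` and `|∇𝔢|²` are Morse functions. -/
def CondM {d : ℕ} (f : (Fin d → ℝ) → ℝ) : Prop := IsMorse f ∧ IsMorse (gradSq f)

/-- `Φ_{m,n}(V) = (Σ_x |V(x)|^{1/m} (1+|x|)^n)^m`, valued in `[0,∞]`. -/
def Phi {d : ℕ} (m n : ℕ) (V : Γd d → ℝ) : ℝ≥0∞ :=
  (∑' x : Γd d, ENNReal.ofReal (|V x| ^ ((1 : ℝ) / m) * (1 + lnorm x) ^ n)) ^ m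

/-- The set of eigenvectors of `H` (with real eigenvalue). -/
def eigvecs {d : ℕ} (H : L2 d →L[ℂ] L2 d) : Set (L2 d) :=
  {ψ : L2 d | ψ ≠ 0 ∧ ∃ μ : ℝ, H ψ = (μ : ℂ) • ψ}

/-- `N_pp[H]`: the Hilbert-space dimension of the closed linear span of all
eigenvectors of `H`. -/
def Npp {d : ℕ} (H : L2 d →L[ℂ] L2 d) : Cardinal :=
  Module.rank ℂ ((Submodule.span ℂ (eigvecs H)).topologicalClosure)

/-- The Fourier transform `ĝ_x(p) = (i/2·|∇𝔢(p)|² + ⟨∇𝔢(p), x⟩) e^{-i⟨p,x⟩}`. -/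
def ghat {d : ℕ} (e : (Fin d → ℝ) → ℝ) (x : Γd d) (p : Fin d → ℝ) : ℂ :=
  ((Complex.I / 2) * ((gradSq e p : ℝ) : ℂ) + ((∑ k, pd e k p * (x k : ℝ) : ℝ) : ℂ)) *
    Complex.exp (-(Complex.I * (dotZ p x : ℝ)))

/-- `g : Γ → ℓ²(Γ)` is the family of vectors `g_x` with Fourier transform `ĝ_x`. -/
def IsGVec {d : ℕ} (e : (Fin d → ℝ) → ℝ) (g : Γd d → L2 d) : Prop :=
  ∀ x m : Γd d,
    (g x : ∀ _ : Γd d, ℂ) m =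
      ((1 / (2 * π) ^ d : ℝ) : ℂ) *
        ∫ p in torusBox d, ghat e x p * Complex.exp (Complex.I * (dotZ p m : ℝ))

/-- `C` is the bounded self-adjoint realization
`C_V = Σ_x i V(x) (|δ_x⟩⟨g_x| - |g_x⟩⟨δ_x|)` of the commutator `i[V, A(𝔢)]`. -/
def IsCommOp {d : ℕ} (V : Γd d → ℝ) (g : Γd d → L2 d) (C : L2 d →L[ℂ] L2 d) : Prop :=
  ∀ ψ : L2 d,
    HasSum (fun x : Γd d =>
      (Complex.I * (V x : ℂ)) • (⟪g x, ψ⟫ • delta x - ⟪delta x, ψ⟫ • g x)) (C ψ)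

/-- `R` is the resolvent `(z - H)^{-1}`. -/
def IsResolventAt {d : ℕ} (H : L2 d →L[ℂ] L2 d) (z : ℂ) (R : L2 d →L[ℂ] L2 d) : Prop :=
  R.comp (z • (1 : L2 d →L[ℂ] L2 d) - H) = 1 ∧ (z • (1 : L2 d →L[ℂ] L2 d) - H).comp R = 1

/-- `‖f‖_{C^m} ≤ C`: all partial derivatives of order `≤ m` are bounded by `C`. -/
def CmNormLe {d : ℕ} (m : ℕ) (f : (Fin d → ℝ) → ℝ) (C : ℝ) : Prop :=
  ∀ j : ℕ, j ≤ m → ∀ (p : Fin d → ℝ) (k : Fin j → Fin d),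
    |iteratedFDeriv ℝ j f p (fun i => Pi.single (k i) 1)| ≤ C

/-- `K(𝔢) ≥ K`: at every critical point, every eigenvalue `λ` of the Hessian
satisfies `|λ|^{1/2} ≥ K`. -/
def MinCurvGe {d : ℕ} (f : (Fin d → ℝ) → ℝ) (K : ℝ) : Prop :=
  ∀ p, fderiv ℝ f p = 0 → ∀ (lam : ℝ) (v : Fin d → ℝ), v ≠ 0 →
    (hess f p).mulVec v = lam • v → K ^ 2 ≤ |lam|

/-- The set of thresholds `Thr(𝔢) = 𝔢(Crit(𝔢))`. -/
def Thr {d : ℕ} (f : (Fin d → ℝ) → ℝ) : Set ℝ := f '' {p | fderiv ℝ f p = 0}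


/-- The number of strictly negative eigenvalues of `C`, counted with multiplicity:
the dimension of the span of eigenvectors with strictly negative eigenvalue. -/
def NegCount {d : ℕ} (C : L2 d →L[ℂ] L2 d) : Cardinal :=
  Module.rank ℂ (Submodule.span ℂ
    {ψ : L2 d | ψ ≠ 0 ∧ ∃ μ : ℝ, μ < 0 ∧ C ψ = (μ : ℂ) • ψ})

/-- The number of strictly positive eigenvalues of `C`, counted with multiplicity. -/
def PosCount {d : ℕ} (C : L2 d →L[ℂ] L2 d) : Cardinal :=
  Module.rank ℂ (Submodule.span ℂ
    {ψ : L2 d | ψ ≠ 0 ∧ ∃ μ : ℝ, 0 < μ ∧ C ψ = (μ : ℂ) • ψ})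



section parseval

open scoped Pointwise

local instance instMSUAC : MeasureSpace UnitAddCircle := ⟨AddCircle.haarAddCircle⟩

local instance instProbUAC : IsProbabilityMeasure (volume : Measure UnitAddCircle) :=
  inferInstanceAs (IsProbabilityMeasure AddCircle.haarAddCircle)

/-- Fourier coefficient of a complex function. -/
def fc {d : ℕ} (f : (Fin d → ℝ) → ℂ) (m : Γd d) : ℂ :=
  ((1 / (2 * π) ^ d : ℝ) : ℂ) *
    ∫ p in torusBox d, f p * Complex.exp (Complex.I * (dotZ p m : ℝ))

lemma torusBox_eq (d : ℕ) : torusBox d = Set.Icc (fun _ => -π) (fun _ => π) := by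
  rw [torusBox, Set.pi_univ_Icc]

/-- lift of the unit torus to the box -/
def liftT {d : ℕ} (t : UnitAddTorus (Fin d)) : Fin d → ℝ :=
  fun i => 2 * π * (AddCircle.equivIoc (1:ℝ) (-(1/2)) (t i)).1

lemma liftT_coe {d : ℕ} (x : Fin d → ℝ) (hx : ∀ i, x i ∈ Set.Ioc (-(1/2) : ℝ) (-(1/2) + 1)) :
    liftT (fun i => (x i : UnitAddCircle)) = (2 * π) • x := by
  funext i
  simp only [liftT, Pi.smul_apply, smul_eq_mul]
  have : AddCircle.equivIoc (1:ℝ) (-(1/2)) (x i : UnitAddCircle) = ⟨x i, hx i⟩ := by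
    rw [← Equiv.eq_symm_apply]
    rfl
  rw [this]

lemma measurable_liftT {d : ℕ} : Measurable (liftT (d := d)) := by
  refine measurable_pi_lambda _ fun i => ?_
  refine Measurable.const_mul ?_ _
  exact measurable_subtype_coe.comp
    ((AddCircle.measurableEquivIoc (1:ℝ) (-(1/2))).measurable.comp (measurable_pi_apply i))

lemma liftT_mem {d : ℕ} (t : UnitAddTorus (Fin d)) : liftT t ∈ torusBox d := by
  intro i _
  have h := (AddCircle.equivIoc (1:ℝ) (-(1/2)) (t i)).2
  simp only [liftT]
  have := Real.pi_pos
  constructor <;> nlinarith [h.1, h.2]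

lemma integral_torus {d : ℕ} (G : UnitAddTorus (Fin d) → ℂ) (g : (Fin d → ℝ) → ℂ)
    (hG : ∀ x : Fin d → ℝ, (∀ i, x i ∈ Set.Ioc (-(1/2) : ℝ) (-(1/2) + 1)) →
      G (fun i => (x i : UnitAddCircle)) = g ((2 * π) • x)) :
    ∫ t, G t = ((1 / (2 * π) ^ d : ℝ) : ℂ) * ∫ p in torusBox d, g p := by
  have hset : {x : Fin d → ℝ | ∀ i, x i ∈ Set.Ioc (-(1/2) : ℝ) (-(1/2) + 1)} =
      Set.univ.pi fun _ => Set.Ioc (-(1/2) : ℝ) (-(1/2) + 1) := by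
    ext x; simp
  have hms : MeasurableSet {x : Fin d → ℝ | ∀ i, x i ∈ Set.Ioc (-(1/2) : ℝ) (-(1/2) + 1)} := by
    rw [hset]; exact MeasurableSet.univ_pi fun _ => measurableSet_Ioc
  rw [UnitAddTorus.integral_preimage G (fun _ => -(1/2))]
  rw [setIntegral_congr_fun hms (g := fun x => g ((2 * π) • x)) (fun x hx => hG x hx)]
  have h2 : (0:ℝ) < 2 * π := by positivity
  rw [Measure.setIntegral_comp_smul_of_pos volume g _ h2]
  have hbox : (2 * π) • {x : Fin d → ℝ | ∀ i, x i ∈ Set.Ioc (-(1/2) : ℝ) (-(1/2) + 1)} =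
      Set.univ.pi fun _ => Set.Ioc (-π) π := by
    ext x
    rw [Set.mem_smul_set_iff_inv_smul_mem₀ h2.ne']
    simp only [Set.mem_ofPred_eq, Pi.smul_apply, smul_eq_mul, Set.mem_Ioc, Set.mem_pi,
      Set.mem_univ, forall_true_left]
    refine forall_congr' fun i => ?_
    rw [inv_mul_eq_div, lt_div_iff₀ h2, div_le_iff₀ h2]
    constructor <;> rintro ⟨h, h'⟩ <;> constructor <;> linarith
  rw [hbox, torusBox]
  have : (Set.univ.pi fun _ : Fin d => Set.Ioc (-π) π) =ᵐ[volume]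
      (Set.univ.pi fun _ : Fin d => Set.Icc (-π) π) := by
    rw [Set.pi_univ_Icc]
    exact Measure.univ_pi_Ioc_ae_eq_Icc
  rw [setIntegral_congr_set this]
  simp [Algebra.smul_def]

lemma mFourier_coe {d : ℕ} (m : Γd d) (x : Fin d → ℝ) :
    UnitAddTorus.mFourier m (fun i => (x i : UnitAddCircle)) =
      Complex.exp (Complex.I * (dotZ ((2 * π) • x) m : ℝ)) := by
  simp only [UnitAddTorus.mFourier, ContinuousMap.coe_mk, fourier_coe_apply, dotZ]
  rw [← Complex.exp_sum]
  congr 1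
  push_cast
  rw [Finset.mul_sum]
  refine Finset.sum_congr rfl fun i _ => ?_
  simp
  ring

lemma fc_eq {d : ℕ} (f : (Fin d → ℝ) → ℂ) (m : Γd d) :
    fc f m = UnitAddTorus.mFourierCoeff (fun t => f (liftT t)) (-m) := by
  rw [fc, UnitAddTorus.mFourierCoeff]
  symm
  refine integral_torus _ _ fun x hx => ?_
  rw [liftT_coe x hx, mFourier_coe]
  simp [mul_comm]

lemma memLp_lift {d : ℕ} (f : (Fin d → ℝ) → ℂ) (hf : Continuous f) :
    MemLp (fun t : UnitAddTorus (Fin d) => f (liftT t)) 2 volume := by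
  have hc : IsCompact (torusBox d) := isCompact_univ_pi fun _ => isCompact_Icc
  obtain ⟨C, hC⟩ := hc.exists_bound_of_continuousOn hf.continuousOn
  exact MemLp.of_bound (hf.measurable.comp measurable_liftT).aestronglyMeasurable C
    (Filter.Eventually.of_forall fun t => hC _ (liftT_mem t))

lemma parseval {d : ℕ} (f g : (Fin d → ℝ) → ℂ) (hf : Continuous f) (hg : Continuous g) :
    HasSum (fun m : Γd d => (starRingEnd ℂ) (fc f m) * fc g m)
      (((1 / (2 * π) ^ d : ℝ) : ℂ) * ∫ p in torusBox d, (starRingEnd ℂ) (f p) * g p) := by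
  have h := UnitAddTorus.hasSum_prod_mFourierCoeff ((memLp_lift f hf).toLp _)
    ((memLp_lift g hg).toLp _)
  have h1 : ∀ (f : (Fin d → ℝ) → ℂ) (hf : Continuous f) (m : Γd d),
      UnitAddTorus.mFourierCoeff ((memLp_lift f hf).toLp _) m = fc f (-m) := by
    intro f hf m
    rw [fc_eq, neg_neg]
    refine integral_congr_ae ?_
    filter_upwards [(memLp_lift f hf).coeFn_toLp] with t ht
    simp only [ht]
  have h' := h.congr_fun (g := fun m : Γd d => (starRingEnd ℂ) (fc f (-m)) * fc g (-m))
    (fun m => by rw [← h1 f hf m, ← h1 g hg m])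
  have h2 : ∫ t, (starRingEnd ℂ) (((memLp_lift f hf).toLp _ : Lp ℂ 2 volume) t) *
      ((memLp_lift g hg).toLp _ : Lp ℂ 2 volume) t =
      ((1 / (2 * π) ^ d : ℝ) : ℂ) * ∫ p in torusBox d, (starRingEnd ℂ) (f p) * g p := by
    rw [← integral_torus (fun t => (starRingEnd ℂ) (f (liftT t)) * g (liftT t))]
    · refine integral_congr_ae ?_
      filter_upwards [(memLp_lift f hf).coeFn_toLp, (memLp_lift g hg).coeFn_toLp] with t ht ht'
      rw [ht, ht']
    · intro x hx
      rw [liftT_coe x hx]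
  have h4 := h2 ▸ h'
  have h3 := (Equiv.neg (Γd d)).hasSum_iff.2 h4
  refine h3.congr_fun fun m => ?_
  simp [Function.comp]

lemma memlp_fc {d : ℕ} (f : (Fin d → ℝ) → ℂ) (hf : Continuous f) :
    Memℓp (fun m : Γd d => fc f m) 2 := by
  have h := (parseval f f hf hf).summable
  refine memℓp_gen ?_
  have h' := h.norm
  refine h'.congr fun m => ?_
  simp [pow_two]

lemma fc_one {d : ℕ} (m : Γd d) : fc (fun _ => 1) m = if m = 0 then 1 else 0 := by
  have h := orthonormal_iff_ite.1 (UnitAddTorus.orthonormal_mFourier (d := Fin d)) 0 m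
  rw [fc_eq, UnitAddTorus.mFourierCoeff]
  simp only [ContinuousMap.inner_toLp, UnitAddTorus.mFourier_zero] at h
  simp only [neg_neg, smul_eq_mul, mul_one]
  rw [eq_comm] at h
  simp only [eq_comm (a := (0 : Fin d → ℤ))] at h
  rw [h]
  simp

end parseval
section operator

lemma inner_delta_left {d : ℕ} (x : Γd d) (ψ : L2 d) :
    ⟪delta x, ψ⟫ = (ψ : ∀ _ : Γd d, ℂ) x := by
  rw [delta, lp.inner_single_left]
  simp

lemma delta_apply {d : ℕ} (y u : Γd d) :
    (delta y : ∀ _ : Γd d, ℂ) u = if u = y then 1 else 0 := by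
  rw [delta, lp.single_apply]
  by_cases h : u = y
  · subst h; simp
  · simp [h]

lemma fc_mul_exp {d : ℕ} (f : (Fin d → ℝ) → ℂ) (v u : Γd d) :
    fc (fun p => f p * Complex.exp (-(Complex.I * (dotZ p u : ℝ)))) v = fc f (v - u) := by
  unfold fc
  congr 1
  refine integral_congr_ae (Filter.Eventually.of_forall fun p => ?_)
  simp only
  rw [mul_assoc, ← Complex.exp_add]
  congr 2
  simp only [dotZ, Pi.sub_apply]
  push_cast
  simp only [mul_sub, Finset.sum_sub_distrib]
  ring

lemma continuous_dotZ {d : ℕ} (u : Γd d) : Continuous fun p : Fin d → ℝ => dotZ p u := by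
  unfold dotZ; fun_prop

lemma conj_expI (t : ℝ) : (starRingEnd ℂ) (Complex.exp (-(Complex.I * t))) =
    Complex.exp (Complex.I * t) := by
  rw [← Complex.exp_conj]; simp

/-- The free resolvent equation. -/
lemma free_resolvent {d : ℕ} (e : (Fin d → ℝ) → ℝ) (hec : Continuous e)
    (Hop : L2 d →L[ℂ] L2 d) (hH : IsMultiplier e Hop) (z : ℂ) (hz : z.im ≠ 0)
    (ψ χ : L2 d) (hψ : z • ψ - Hop ψ = χ) (x : Γd d) :
    HasSum (fun u : Γd d => fc (fun p => (z - e p)⁻¹) (x - u) * (χ : ∀ _ : Γd d, ℂ) u)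
      ((ψ : ∀ _ : Γd d, ℂ) x) := by
  have hne : ∀ p, z - e p ≠ 0 := by
    intro p h
    apply hz
    have := congrArg Complex.im h
    simpa using this
  have hrc : Continuous fun p => (z - (e p : ℂ))⁻¹ :=
    Continuous.inv₀ (by fun_prop) hne
  have hexc : ∀ u : Γd d, Continuous fun p : Fin d → ℝ =>
      Complex.exp (-(Complex.I * (dotZ p u : ℝ))) := by
    intro u
    have := continuous_dotZ u
    fun_prop
  set r' : (Fin d → ℝ) → ℂ := fun p => (starRingEnd ℂ) (z - (e p : ℂ))⁻¹ with hr'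
  have hr'c : Continuous r' := Complex.continuous_conj.comp hrc
  set gf : (Fin d → ℝ) → ℂ := fun p => r' p * Complex.exp (-(Complex.I * (dotZ p x : ℝ)))
  have hgf : Continuous gf := hr'c.mul (hexc x)
  let g : L2 d := ⟨fun m => fc gf m, memlp_fc gf hgf⟩
  have hg : ∀ m, (g : ∀ _ : Γd d, ℂ) m = fc r' (m - x) := fun m => fc_mul_exp r' m x
  have hconj : ∀ m, (starRingEnd ℂ) ((g : ∀ _ : Γd d, ℂ) m) =
      fc (fun p => (z - e p)⁻¹) (x - m) := by
    intro m
    rw [hg]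
    simp only [fc, map_mul, Complex.conj_ofReal, ← integral_conj]
    congr 1
    refine integral_congr_ae (Filter.Eventually.of_forall fun p => ?_)
    simp only [hr', map_mul, Complex.conj_conj]
    congr 1
    rw [← Complex.exp_conj]
    congr 1
    simp only [map_mul, Complex.conj_I, Complex.conj_ofReal]
    have : dotZ p (x - m) = - dotZ p (m - x) := by
      simp [dotZ, mul_sub, Finset.sum_sub_distrib]
    rw [this]; push_cast; ring
  -- adjoint action
  have hadj : ∀ u, ⟪Hop (delta u), g⟫ =
      (starRingEnd ℂ) z * (g : ∀ _ : Γd d, ℂ) u - (delta x : ∀ _ : Γd d, ℂ) u := by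
    intro u
    have hs := lp.hasSum_inner (𝕜 := ℂ) (Hop (delta u)) g
    have hp := parseval (fun p => (e p : ℂ) * Complex.exp (-(Complex.I * (dotZ p u : ℝ)))) gf
      ((by fun_prop : Continuous fun p => (e p : ℂ)).mul (hexc u)) hgf
    have h1 : ∀ v, (Hop (delta u) : ∀ _ : Γd d, ℂ) v =
        fc (fun p => (e p : ℂ) * Complex.exp (-(Complex.I * (dotZ p u : ℝ)))) v := by
      intro v
      rw [fc_mul_exp, ← inner_delta_left, hH]
      rfl
    have h2 := hs.unique (hp.congr_fun (g := fun i => ⟪(Hop (delta u) : ∀ _ : Γd d, ℂ) i, (g : ∀ _ : Γd d, ℂ) i⟫) (fun v => by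
      rw [h1]; simp only [RCLike.inner_apply]; rw [mul_comm]))
    rw [h2, hg, delta_apply]
    have h3 : (if u = x then (1:ℂ) else 0) = fc (fun _ => 1) (u - x) := by
      rw [fc_one]; simp [sub_eq_zero]
    rw [h3]
    have hIntg : ∀ f : (Fin d → ℝ) → ℂ, Continuous f → IntegrableOn f (torusBox d) := by
      intro f hf
      exact hf.continuousOn.integrableOn_compact (isCompact_univ_pi fun _ => isCompact_Icc)
    have hE : Continuous fun p : Fin d → ℝ =>
      Complex.exp ((Complex.I * (dotZ p (u - x) : ℝ))) := by
      have := continuous_dotZ (u - x)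
      fun_prop
    simp only [fc]
    rw [mul_left_comm, ← mul_sub, ← integral_const_mul ((starRingEnd ℂ) z), ← integral_sub]
    rotate_left
    · exact hIntg _ (continuous_const.mul (hr'c.mul hE))
    · exact hIntg _ (continuous_const.mul hE)
    congr 1
    refine integral_congr_ae (Filter.Eventually.of_forall fun p => ?_)
    simp only [map_mul, conj_expI, Complex.conj_ofReal, gf]
    have hE2 : Complex.exp (Complex.I * (dotZ p (u - x) : ℝ)) =
        Complex.exp (Complex.I * (dotZ p u : ℝ)) * Complex.exp (-(Complex.I * (dotZ p x : ℝ))) := by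
      rw [← Complex.exp_add]
      congr 1
      simp [dotZ, mul_sub, Finset.sum_sub_distrib]
      ring
    rw [hE2]
    have hk : (e p : ℂ) * r' p = (starRingEnd ℂ) z * r' p - 1 := by
      have hne' : (starRingEnd ℂ) z - (e p : ℂ) ≠ 0 := by
        intro h
        apply hne p
        have := congrArg (starRingEnd ℂ) h
        simpa using this
      simp only [hr', map_inv₀, map_sub, Complex.conj_ofReal]
      field_simp
      ring
    linear_combination (Complex.exp (Complex.I * (dotZ p u : ℝ)) *
      Complex.exp (-(Complex.I * (dotZ p x : ℝ)))) * hk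
  have hadj2 : ContinuousLinearMap.adjoint Hop g = (starRingEnd ℂ) z • g - delta x := by
    ext u
    rw [← inner_delta_left, ContinuousLinearMap.adjoint_inner_right, hadj]
    rfl
  have hfin : ⟪g, χ⟫ = (ψ : ∀ _ : Γd d, ℂ) x := by
    rw [← hψ, inner_sub_right, ← ContinuousLinearMap.adjoint_inner_left, hadj2, inner_sub_left,
      inner_smul_left, inner_smul_right, inner_delta_left]
    simp
  rw [← hfin]
  refine (lp.hasSum_inner (𝕜 := ℂ) g χ).congr_fun fun u => ?_
  rw [← hconj]
  simp only [RCLike.inner_apply]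
  rw [mul_comm]

lemma lnorm_nonneg {d : ℕ} (x : Γd d) : 0 ≤ lnorm x := Real.sqrt_nonneg _

lemma lnorm_eq {d : ℕ} (x : Γd d) :
    lnorm x = ‖(WithLp.toLp 2 (fun i => (x i : ℝ)) : EuclideanSpace ℝ (Fin d))‖ := by
  rw [EuclideanSpace.norm_eq, lnorm]; simp

lemma lnorm_sub_le {d : ℕ} (x y : Γd d) : lnorm (x - y) ≤ lnorm x + lnorm y := by
  simp only [lnorm_eq]
  refine le_trans (le_of_eq ?_) (norm_sub_le _ _)
  congr 1
  ext i
  simp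

lemma weight_sub {d : ℕ} (x y : Γd d) :
    (1 + lnorm (x - y)) ^ 2 ≤ (1 + lnorm x) ^ 2 * (1 + lnorm y) ^ 2 := by
  rw [← mul_pow]
  have := lnorm_sub_le x y
  have h1 := lnorm_nonneg x
  have h2 := lnorm_nonneg y
  have h3 := lnorm_nonneg (x - y)
  refine pow_le_pow_left₀ (by positivity) ?_ 2
  nlinarith [mul_nonneg h1 h2]

/-- Consequences of the smallness of `Φ_{2,2}(V)`. -/
lemma phi_bound {d : ℕ} (V : Γd d → ℝ) (c : ℝ) (h : Phi 2 2 V < ENNReal.ofReal c) :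
    Summable (fun x => |V x| * ((1 + lnorm x) ^ 2) ^ 2) ∧
      ∑' x, |V x| * ((1 + lnorm x) ^ 2) ^ 2 ≤ c := by
  set a : Γd d → ℝ := fun x => |V x| ^ ((1 : ℝ) / (2:ℕ)) * (1 + lnorm x) ^ 2 with ha
  have ha0 : ∀ x, 0 ≤ a x := fun x => by
    have := lnorm_nonneg x
    positivity
  have hasq : ∀ x, |V x| * ((1 + lnorm x) ^ 2) ^ 2 = a x ^ 2 := by
    intro x
    simp only [ha]
    rw [mul_pow, ← Real.rpow_natCast (|V x| ^ _), ← Real.rpow_mul (abs_nonneg _)]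
    norm_num
  have hphi : Phi 2 2 V = (∑' x, ENNReal.ofReal (a x)) ^ 2 := rfl
  rw [hphi] at h
  have hfin : ∑' x, ENNReal.ofReal (a x) ≠ ⊤ := by
    intro ht
    rw [ht] at h
    simp at h
  have hsum : Summable a := by
    have := ENNReal.summable_toReal hfin
    refine this.congr fun x => ENNReal.toReal_ofReal (ha0 x)
  have hle : ∀ x, a x ≤ ∑' u, a u := fun x => hsum.le_tsum x fun j _ => ha0 j
  have hsq : ∀ x, a x ^ 2 ≤ (∑' u, a u) * a x := by
    intro x; rw [pow_two]; exact mul_le_mul_of_nonneg_right (hle x) (ha0 x)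
  have hs2 : Summable fun x => a x ^ 2 :=
    Summable.of_nonneg_of_le (fun x => sq_nonneg _) hsq (hsum.mul_left _)
  simp only [hasq]
  refine ⟨hs2, ?_⟩
  have h1 : ∑' x, a x ^ 2 ≤ (∑' u, a u) ^ 2 := by
    rw [pow_two (∑' u, a u), ← tsum_mul_left]
    exact hs2.tsum_le_tsum hsq (hsum.mul_left _)
  refine h1.trans ?_
  rw [← ENNReal.ofReal_tsum_of_nonneg ha0 hsum, ← ENNReal.ofReal_pow (tsum_nonneg ha0)] at h
  exact (ENNReal.ofReal_lt_ofReal_iff'.1 h).1.le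

lemma main_of_bound {d : ℕ} (e : (Fin d → ℝ) → ℝ) (hec : Continuous e) (C : ℝ) (hC : 0 < C)
    (hG : ∀ z : ℂ, z.im ≠ 0 → ∀ m : Γd d,
      ‖fc (fun p => (z - e p)⁻¹) m‖ ≤ C * (1 + lnorm m) ^ 2)
    (V : Γd d → ℝ) (Hop Mv : L2 d →L[ℂ] L2 d)
    (hH : IsMultiplier e Hop) (hM : IsMulOp V Mv)
    (hV : Phi 2 2 V < ENNReal.ofReal (1 / (2 * C)))
    (z : ℂ) (hz : z.im ≠ 0) (R : L2 d →L[ℂ] L2 d) (hR : IsResolventAt (Hop + Mv) z R)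
    (x y : Γd d) :
    ‖(⟪delta x, R (delta y)⟫ : ℂ)‖ ≤ 2 * C * (1 + lnorm x) ^ 2 * (1 + lnorm y) ^ 2 := by
  obtain ⟨hs, hA⟩ := phi_bound V _ hV
  set w : Γd d → ℝ := fun u => (1 + lnorm u) ^ 2 with hw
  have hw1 : ∀ u, 1 ≤ w u := fun u => by
    have := lnorm_nonneg u
    simp only [hw]; nlinarith
  have hw0 : ∀ u, 0 ≤ w u := fun u => zero_le_one.trans (hw1 u)
  set A := ∑' x, |V x| * (w x) ^ 2 with hAdef
  change Summable (fun x => |V x| * (w x) ^ 2) at hs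
  set ψ := R (delta y) with hψ
  set χ : L2 d := delta y + Mv ψ with hχ
  have heq : z • ψ - Hop ψ = χ := by
    have := congrArg (fun T : L2 d →L[ℂ] L2 d => T (delta y)) hR.2
    simp only [ContinuousLinearMap.comp_apply, _root_.sub_apply,
      _root_.smul_apply, _root_.add_apply,
      _root_.one_apply_eq_self] at this
    rw [hχ, ← this]
    abel
  have hψn : ∀ u, ‖(ψ : ∀ _ : Γd d, ℂ) u‖ ≤ ‖ψ‖ := fun u => lp.norm_apply_le_norm (by norm_num) ψ u
  -- T
  have hTs : Summable fun u => w u * |V u| * ‖(ψ : ∀ _ : Γd d, ℂ) u‖ := by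
    refine Summable.of_nonneg_of_le (fun u => ?_) (fun u => ?_) (hs.mul_right ‖ψ‖)
    · have := hw0 u; positivity
    · have h1 := hw1 u
      have h0 := abs_nonneg (V u)
      have : w u * |V u| ≤ |V u| * w u ^ 2 := by nlinarith [mul_nonneg h0 (hw0 u)]
      exact mul_le_mul this (hψn u) (norm_nonneg _) (by positivity)
  set T := ∑' u, w u * |V u| * ‖(ψ : ∀ _ : Γd d, ℂ) u‖ with hT
  have hkey : ∀ v, ‖(ψ : ∀ _ : Γd d, ℂ) v‖ ≤ C * w v * (w y + T) := by
    intro v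
    have h1 := free_resolvent e hec Hop hH z hz ψ χ heq v
    set b : Γd d → ℝ := fun u => C * w v * ((if u = y then w y else 0) +
      w u * |V u| * ‖(ψ : ∀ _ : Γd d, ℂ) u‖)
    have hb : HasSum b (C * w v * (w y + T)) := by
      refine HasSum.mul_left _ (HasSum.add ?_ hTs.hasSum)
      exact hasSum_ite_eq y (w y)
    rw [← h1.tsum_eq]
    refine tsum_of_norm_bounded hb fun u => ?_
    rw [norm_mul]
    have hg : ‖fc (fun p => (z - e p)⁻¹) (v - u)‖ ≤ C * w v * w u := by
      refine (hG z hz _).trans ?_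
      rw [mul_assoc]
      exact mul_le_mul_of_nonneg_left (weight_sub v u) hC.le
    have hχu : ‖(χ : ∀ _ : Γd d, ℂ) u‖ ≤ (if u = y then 1 else 0) +
        |V u| * ‖(ψ : ∀ _ : Γd d, ℂ) u‖ := by
      have : (χ : ∀ _ : Γd d, ℂ) u = (if u = y then 1 else 0) +
          (V u : ℂ) * (ψ : ∀ _ : Γd d, ℂ) u := by
        rw [hχ, lp.coeFn_add, Pi.add_apply, hM, delta_apply]
      rw [this]
      refine (norm_add_le _ _).trans (add_le_add ?_ ?_)
      · split_ifs <;> simp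
      · rw [norm_mul]; simp
    have hCw : 0 ≤ C * w v * w u := mul_nonneg (mul_nonneg hC.le (hw0 v)) (hw0 u)
    refine (mul_le_mul hg hχu (norm_nonneg _) hCw).trans (le_of_eq ?_)
    simp only [b]
    by_cases h : u = y
    · subst h; simp; ring
    · simp [h]; ring
  have hT0 : 0 ≤ T := tsum_nonneg fun u => by have := hw0 u; positivity
  have hTle : T ≤ A * (C * (w y + T)) := by
    rw [hAdef, ← tsum_mul_right]
    refine hTs.tsum_le_tsum (fun u => ?_) (hs.mul_right _)
    have h1 := hkey u
    have h0 : 0 ≤ w u * |V u| := mul_nonneg (hw0 u) (abs_nonneg _)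
    refine (mul_le_mul_of_nonneg_left h1 h0).trans (le_of_eq ?_)
    ring
  have hTy : T ≤ w y := by
    have h1 : A * (C * (w y + T)) ≤ (1 / (2 * C)) * (C * (w y + T)) :=
      mul_le_mul_of_nonneg_right hA (mul_nonneg hC.le (add_nonneg (hw0 y) hT0))
    have h2 : (1 / (2 * C)) * (C * (w y + T)) = (w y + T) / 2 := by field_simp
    linarith
  rw [inner_delta_left]
  refine (hkey x).trans ?_
  have h1 : w y + T ≤ 2 * w y := by linarith
  have h2 := mul_le_mul_of_nonneg_left h1 (mul_nonneg hC.le (hw0 x))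
  refine h2.trans (le_of_eq ?_)
  simp only [hw]
  ring

end operator
section localint

open Filter Topology

lemma gradSq_nonneg {d : ℕ} (e : (Fin d → ℝ) → ℝ) (p : Fin d → ℝ) : 0 ≤ gradSq e p :=
  Finset.sum_nonneg fun _ _ => sq_nonneg _

lemma fderiv_eq_sum_pd {d : ℕ} (f : (Fin d → ℝ) → ℝ) (p v : Fin d → ℝ) :
    fderiv ℝ f p v = ∑ i, v i * pd f i p := by
  conv_lhs => rw [pi_eq_sum_univ' v]
  rw [map_sum]
  refine Finset.sum_congr rfl fun i _ => ?_
  rw [map_smul, smul_eq_mul, pd]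

lemma contDiff_pd {d : ℕ} (e : (Fin d → ℝ) → ℝ) (he : ContDiff ℝ 2 e) (k : Fin d) :
    ContDiff ℝ 1 (pd e k) := by
  unfold pd
  exact (he.fderiv_right (m := 1) (by norm_num)).clm_apply contDiff_const

lemma gradSq_eq_zero_iff {d : ℕ} (e : (Fin d → ℝ) → ℝ) (p : Fin d → ℝ) :
    gradSq e p = 0 ↔ fderiv ℝ e p = 0 := by
  constructor
  · intro h
    rw [gradSq, Finset.sum_eq_zero_iff_of_nonneg (fun _ _ => sq_nonneg _)] at h
    ext v
    rw [fderiv_eq_sum_pd]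
    refine Finset.sum_eq_zero fun i hi => ?_
    have := h i hi
    simp only [ne_eq, OfNat.ofNat_ne_zero, not_false_eq_true, pow_eq_zero_iff] at this
    rw [this, mul_zero]
  · intro h
    simp [gradSq, pd, h]

lemma grad_lower {d : ℕ} (e : (Fin d → ℝ) → ℝ) (he : ContDiff ℝ 2 e) (hM : IsMorse e)
    (p₀ : Fin d → ℝ) (hp : fderiv ℝ e p₀ = 0) :
    ∃ c : ℝ, 0 < c ∧ ∀ᶠ p in 𝓝 p₀, c * ‖p - p₀‖ ^ 2 ≤ gradSq e p := by
  have hd : ∀ k, HasFDerivAt (pd e k) (fderiv ℝ (pd e k) p₀) p₀ := fun k =>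
    ((contDiff_pd e he k).differentiable (by norm_num) p₀).hasFDerivAt
  have hg : HasFDerivAt (fun p k => pd e k p)
      (ContinuousLinearMap.pi fun k => fderiv ℝ (pd e k) p₀) p₀ := hasFDerivAt_pi.2 hd
  have hinj : Function.Injective
      (ContinuousLinearMap.pi fun k => fderiv ℝ (pd e k) p₀ :
        (Fin d → ℝ) →L[ℝ] (Fin d → ℝ)) := by
    rw [injective_iff_map_eq_zero]
    intro v hv
    refine Matrix.eq_zero_of_vecMul_eq_zero (hM p₀ hp) ?_
    rw [← hv]
    ext j
    change Matrix.vecMul v (hess e p₀) j = fderiv ℝ (pd e j) p₀ v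
    rw [fderiv_eq_sum_pd]
    rfl
  obtain ⟨K, hK0, hK⟩ := LinearMap.exists_antilipschitzWith
    (ContinuousLinearMap.pi fun k => fderiv ℝ (pd e k) p₀ :
        (Fin d → ℝ) →L[ℝ] (Fin d → ℝ)).toLinearMap (LinearMap.ker_eq_bot.2 hinj)
  have hO := (hg.isTheta_sub (hK.isInducing
    (ContinuousLinearMap.continuous _))).2
  obtain ⟨C, hC0, hC⟩ := hO.exists_pos
  refine ⟨(C ^ 2)⁻¹, by positivity, ?_⟩
  filter_upwards [hC.bound] with p hp'
  have h0 : ∀ k, pd e k p₀ = 0 := fun k => by simp [pd, hp]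
  have h1 : ‖(fun k => pd e k p) - (fun k => pd e k p₀)‖ ≤ Real.sqrt (gradSq e p) := by
    rw [pi_norm_le_iff_of_nonneg (Real.sqrt_nonneg _)]
    intro k
    simp only [Pi.sub_apply, h0, sub_zero, Real.norm_eq_abs]
    refine Real.abs_le_sqrt ?_
    exact Finset.single_le_sum (f := fun k => pd e k p ^ 2) (fun _ _ => sq_nonneg _)
      (Finset.mem_univ k)
  have h2 : ‖p - p₀‖ ≤ C * Real.sqrt (gradSq e p) :=
    hp'.trans (mul_le_mul_of_nonneg_left h1 hC0.le)
  have h3 : ‖p - p₀‖ ^ 2 ≤ C ^ 2 * gradSq e p := by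
    have := pow_le_pow_left₀ (norm_nonneg _) h2 2
    rwa [mul_pow, Real.sq_sqrt (gradSq_nonneg e p)] at this
  rw [inv_mul_le_iff₀ (by positivity)]
  exact h3

lemma continuous_gradSq {d : ℕ} (e : (Fin d → ℝ) → ℝ) (he : ContDiff ℝ 2 e) :
    Continuous (gradSq e) := by
  unfold gradSq
  exact continuous_finsetSum _ fun k _ => ((contDiff_pd e he k).continuous).pow 2

lemma integrableOn_norm_rpow {d : ℕ} (hd : 3 ≤ d) (p₀ : Fin d → ℝ) (r : ℝ) :
    IntegrableOn (fun p => ‖p - p₀‖ ^ (-(8/3) : ℝ)) (Metric.ball p₀ r) := by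
  have : Nonempty (Fin d) := ⟨⟨0, by omega⟩⟩
  have : Nontrivial (Fin d → ℝ) := Function.nontrivial
  have h0 : IntegrableOn (fun p : Fin d → ℝ => ‖p‖ ^ (-(8/3) : ℝ)) (Metric.ball 0 r) := by
    rw [integrableOn_fun_norm_addHaar volume (f := fun t => t ^ (-(8/3) : ℝ))]
    have h1 : IntegrableOn (fun t : ℝ => t ^ ((d : ℝ) - 1 - 8/3)) (Set.Ioo 0 r) := by
      by_cases hr : 0 < r
      · rw [intervalIntegral.integrableOn_Ioo_rpow_iff hr]
        have : (3:ℝ) ≤ d := by exact_mod_cast hd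
        linarith
      · rw [Set.Ioo_eq_empty hr]; exact integrableOn_empty
    refine h1.congr_fun (fun t ht => ?_) measurableSet_Ioo
    simp only [Module.finrank_fintype_fun_eq_card, Fintype.card_fin, smul_eq_mul]
    rw [← Real.rpow_natCast, ← Real.rpow_add ht.1]
    congr 1
    rw [Nat.cast_sub (by omega)]
    push_cast; ring
  have hmp : MeasurePreserving (fun p : Fin d → ℝ => p - p₀) volume volume :=
    measurePreserving_sub_right volume p₀
  have := (hmp.integrableOn_comp_preimage
    (Homeomorph.subRight p₀).measurableEmbedding).2 h0
  have hs : (fun p => p - p₀) ⁻¹' Metric.ball 0 r = Metric.ball p₀ r := by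
    ext p
    simp [dist_eq_norm]
  rw [hs] at this
  exact this

lemma locInt {d : ℕ} (hd : 3 ≤ d) (e : (Fin d → ℝ) → ℝ) (he : ContDiff ℝ 2 e)
    (hM : IsMorse e) :
    LocallyIntegrable (fun p => gradSq e p ^ (-(4/3) : ℝ)) := by
  intro p₀
  have hc := continuous_gradSq e he
  have hmeas : Measurable (fun p => gradSq e p ^ (-(4/3) : ℝ)) := hc.measurable.pow_const _
  by_cases hp : fderiv ℝ e p₀ = 0
  · obtain ⟨c, hc0, hcb⟩ := grad_lower e he hM p₀ hp
    obtain ⟨r, hr, hball⟩ := Metric.eventually_nhds_iff_ball.1 hcb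
    refine ⟨Metric.ball p₀ r, Metric.ball_mem_nhds _ hr, ?_⟩
    refine Integrable.mono' ((integrableOn_norm_rpow hd p₀ r).const_mul (c ^ (-(4/3) : ℝ)))
      hmeas.aestronglyMeasurable ?_
    refine (ae_restrict_iff' measurableSet_ball).2 (Eventually.of_forall fun p hpb => ?_)
    rw [Real.norm_of_nonneg (Real.rpow_nonneg (gradSq_nonneg e p) _)]
    by_cases hpp : p = p₀
    · subst hpp
      rw [(gradSq_eq_zero_iff e p).2 hp, Real.zero_rpow (by norm_num)]
      positivity
    · have hn : 0 < ‖p - p₀‖ := norm_pos_iff.2 (sub_ne_zero.2 hpp)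
      have h1 := hball p hpb
      refine (Real.rpow_le_rpow_of_nonpos (by positivity) h1 (by norm_num)).trans (le_of_eq ?_)
      rw [Real.mul_rpow hc0.le (by positivity), ← Real.rpow_natCast, ← Real.rpow_mul hn.le]
      norm_num
  · have hpos : 0 < gradSq e p₀ := lt_of_le_of_ne (gradSq_nonneg e p₀)
      fun h => hp ((gradSq_eq_zero_iff e p₀).1 h.symm)
    have hca : ContinuousAt (fun p => gradSq e p ^ (-(4/3) : ℝ)) p₀ :=
      hc.continuousAt.rpow_const (Or.inl hpos.ne')
    exact hca.integrableAtFilter (hmeas.stronglyMeasurable.stronglyMeasurableAtFilter)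
      (volume.finiteAt_nhds p₀)

lemma crit_null {d : ℕ} (hd : 3 ≤ d) (e : (Fin d → ℝ) → ℝ) (he : ContDiff ℝ 2 e)
    (hM : IsMorse e) : ∀ᵐ p, 0 < gradSq e p := by
  have : Nonempty (Fin d) := ⟨⟨0, by omega⟩⟩
  have : Nontrivial (Fin d → ℝ) := Function.nontrivial
  rw [ae_iff]
  refine measure_null_of_locally_null _ fun p₀ hp₀ => ?_
  have hp : fderiv ℝ e p₀ = 0 := (gradSq_eq_zero_iff e p₀).1
    (le_antisymm (not_lt.1 hp₀) (gradSq_nonneg e p₀))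
  obtain ⟨c, hc0, hcb⟩ := grad_lower e he hM p₀ hp
  refine ⟨_, inter_mem_nhdsWithin _ hcb, ?_⟩
  refine measure_mono_null ?_ (measure_singleton p₀)
  rintro p ⟨h1, h2⟩
  by_contra hne
  have hn : 0 < ‖p - p₀‖ := norm_pos_iff.2 (sub_ne_zero.2 hne)
  exact h1 (lt_of_lt_of_le (by positivity) h2)

lemma isCompact_torusBox (d : ℕ) : IsCompact (torusBox d) :=
  isCompact_univ_pi fun _ => isCompact_Icc

lemma measurableSet_torusBox (d : ℕ) : MeasurableSet (torusBox d) :=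
  MeasurableSet.univ_pi fun _ => measurableSet_Icc

/-- integration by parts on the torus -/
lemma div_int_zero {n : ℕ} (X : Fin (n+1) → (Fin (n+1) → ℝ) → ℂ)
    (hX : ∀ i, ContDiff ℝ 1 (X i))
    (hper : ∀ i (p : Fin (n+1) → ℝ) (m : Γd (n+1)), X i (p + fun j => 2 * π * (m j : ℝ)) = X i p) :
    ∫ p in torusBox (n+1), ∑ i, fderiv ℝ (X i) p (Pi.single i 1) = 0 := by
  rw [torusBox_eq]
  have hcont : Continuous fun p => ∑ i, fderiv ℝ (X i) p (Pi.single i 1) := by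
    refine continuous_finsetSum _ fun i _ => ?_
    exact ((hX i).continuous_fderiv (by norm_num)).clm_apply continuous_const
  rw [integral_divergence_of_hasFDerivAt_off_countable' (fun _ => -π) (fun _ => π)
    (fun _ => by linarith [Real.pi_pos]) X (fun i => fderiv ℝ (X i)) ∅ Set.countable_empty
    (fun i => (hX i).continuous.continuousOn)
    (fun x _ i => ((hX i).differentiable (by norm_num) x).hasFDerivAt)
    (hcont.continuousOn.integrableOn_compact isCompact_Icc)]
  refine Finset.sum_eq_zero fun i _ => ?_
  rw [sub_eq_zero]
  congr 1
  funext x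
  rw [← hper i (i.insertNth (-π) x) (Pi.single i 1)]
  congr 1
  funext j
  refine Fin.succAboveCases i ?_ (fun k => ?_) j
  · simp; ring
  · simp [Fin.succAbove_ne]

end localint

section ibp

open Filter Topology

/-- the character `exp(i⟨p,m⟩)` -/
def chr {d : ℕ} (m : Γd d) (p : Fin d → ℝ) : ℂ := Complex.exp (Complex.I * (dotZ p m : ℝ))

lemma norm_chr {d : ℕ} (m : Γd d) (p : Fin d → ℝ) : ‖chr m p‖ = 1 := by
  rw [chr, mul_comm, Complex.norm_exp_ofReal_mul_I]

lemma contDiff_chr {d : ℕ} (m : Γd d) : ContDiff ℝ 1 (chr m) := by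
  unfold chr dotZ
  have h : ContDiff ℝ 1 fun p : Fin d → ℝ => ∑ i, p i * (m i : ℝ) :=
    ContDiff.sum fun i _ => (contDiff_apply ℝ ℝ (ι := Fin d) i).mul contDiff_const
  exact ContDiff.cexp (contDiff_const.mul (Complex.ofRealCLM.contDiff.comp h))

lemma chr_periodic {d : ℕ} (m a : Γd d) (p : Fin d → ℝ) :
    chr m (p + fun i => 2 * π * (a i : ℝ)) = chr m p := by
  rw [chr, chr, Complex.exp_eq_exp_iff_exists_int]
  refine ⟨∑ i, a i * m i, ?_⟩
  simp only [dotZ, Pi.add_apply, add_mul, Finset.sum_add_distrib]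
  push_cast
  rw [mul_add, Finset.sum_mul, Finset.mul_sum (a := Complex.I) (s := Finset.univ)
    (f := fun i => 2 * (π : ℂ) * (a i : ℂ) * (m i : ℂ))]
  congr 1
  exact Finset.sum_congr rfl fun i _ => by ring

lemma pd_periodic {d : ℕ} (e : (Fin d → ℝ) → ℝ) (he : Periodic2pi e) (k : Fin d)
    (p : Fin d → ℝ) (a : Γd d) :
    pd e k (p + fun i => 2 * π * (a i : ℝ)) = pd e k p := by
  unfold pd
  rw [← fderiv_comp_add_right]
  congr 2
  funext q
  exact he q a

lemma line_pd {d : ℕ} (f : (Fin d → ℝ) → ℝ) (hf : Differentiable ℝ f) (k : Fin d)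
    (p : Fin d → ℝ) :
    HasDerivAt (fun t : ℝ => f (p + t • Pi.single k 1)) (pd f k p) 0 :=
  (hf p).hasFDerivAt.hasLineDerivAt _

lemma line_chr {d : ℕ} (m : Γd d) (k : Fin d) (p : Fin d → ℝ) :
    HasDerivAt (fun t : ℝ => chr m (p + t • Pi.single k 1))
      (Complex.I * (m k : ℝ) * chr m p) 0 := by
  have h1 : HasDerivAt (fun t : ℝ => dotZ (p + t • Pi.single k 1) m) (m k : ℝ) 0 := by
    have : (fun t : ℝ => dotZ (p + t • Pi.single k 1) m) = fun t => dotZ p m + t * (m k : ℝ) := by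
      funext t
      simp [dotZ, add_mul, Finset.sum_add_distrib, Pi.single_apply]
    rw [this]
    simpa using ((hasDerivAt_id (0:ℝ)).mul_const (m k : ℝ)).const_add (dotZ p m)
  have h2 := ((h1.ofReal_comp).const_mul Complex.I).cexp
  simp only [zero_smul, add_zero] at h2
  refine h2.congr_deriv ?_
  rw [chr]; ring

/-- the vector field used in the integration by parts -/
def vf {d : ℕ} (e : (Fin d → ℝ) → ℝ) (L : ℝ → ℂ) (m : Γd d) (η : ℝ) (k : Fin d)
    (p : Fin d → ℝ) : ℂ :=
  chr m p * L (e p) * ((pd e k p * (gradSq e p + η)⁻¹ : ℝ) : ℂ)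

lemma contDiff_gradSq {d : ℕ} (e : (Fin d → ℝ) → ℝ) (he : ContDiff ℝ 2 e) :
    ContDiff ℝ 1 (gradSq e) := by
  unfold gradSq
  exact ContDiff.sum fun k _ => (contDiff_pd e he k).pow 2

lemma contDiff_vf {d : ℕ} (e : (Fin d → ℝ) → ℝ) (he : ContDiff ℝ 2 e) (L : ℝ → ℂ)
    (hL : ContDiff ℝ 1 L) (m : Γd d) (η : ℝ) (hη : 0 < η) (k : Fin d) :
    ContDiff ℝ 1 (vf e L m η k) := by
  unfold vf
  refine ((contDiff_chr m).mul (hL.comp (he.of_le (by norm_num)))).mul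
    (Complex.ofRealCLM.contDiff.comp ((contDiff_pd e he k).mul
      (((contDiff_gradSq e he).add contDiff_const).inv fun p => ?_)))
  have := gradSq_nonneg e p
  positivity

lemma gradSq_periodic {d : ℕ} (e : (Fin d → ℝ) → ℝ) (he : Periodic2pi e)
    (p : Fin d → ℝ) (a : Γd d) :
    gradSq e (p + fun i => 2 * π * (a i : ℝ)) = gradSq e p := by
  unfold gradSq
  simp only [pd_periodic e he]

/-- the remainder term -/
def remD {d : ℕ} (e : (Fin d → ℝ) → ℝ) (m : Γd d) (η : ℝ) (p : Fin d → ℝ) : ℂ :=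
  ∑ k, (Complex.I * (m k : ℝ) * ((pd e k p * (gradSq e p + η)⁻¹ : ℝ) : ℂ) +
    ((pd (pd e k) k p * (gradSq e p + η)⁻¹ -
      pd e k p * ((∑ j, 2 * pd e j p * pd (pd e j) k p) / (gradSq e p + η) ^ 2) : ℝ) : ℂ))

lemma fderiv_vf {d : ℕ} (e : (Fin d → ℝ) → ℝ) (he : ContDiff ℝ 2 e) (L : ℝ → ℂ)
    (hL : ContDiff ℝ 1 L) (m : Γd d) (η : ℝ) (hη : 0 < η) (k : Fin d) (p : Fin d → ℝ) :
    fderiv ℝ (vf e L m η k) p (Pi.single k 1) =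
      chr m p * deriv L (e p) * ((pd e k p ^ 2 * (gradSq e p + η)⁻¹ : ℝ) : ℂ) +
      chr m p * L (e p) * (Complex.I * (m k : ℝ) * ((pd e k p * (gradSq e p + η)⁻¹ : ℝ) : ℂ) +
    ((pd (pd e k) k p * (gradSq e p + η)⁻¹ -
      pd e k p * ((∑ j, 2 * pd e j p * pd (pd e j) k p) / (gradSq e p + η) ^ 2) : ℝ) : ℂ)) := by
  have hb := gradSq_nonneg e p
  have hne : gradSq e p + η ≠ 0 := by positivity
  have hdiff := (contDiff_vf e he L hL m η hη k).differentiable (by norm_num) p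
  have h0 : HasDerivAt (fun t : ℝ => vf e L m η k (p + t • Pi.single k 1))
    (fderiv ℝ (vf e L m η k) p (Pi.single k 1)) 0 := hdiff.hasFDerivAt.hasLineDerivAt _
  refine h0.unique ?_
  have hP : ∀ j, Differentiable ℝ (pd e j) := fun j =>
    (contDiff_pd e he j).differentiable (by norm_num)
  have h1 := line_chr m k p
  have h2 := line_pd e (he.differentiable (by norm_num)) k p
  have h3 : HasDerivAt (fun t : ℝ => L (e (p + t • Pi.single k 1)))
      (pd e k p • deriv L (e p)) 0 := by
    have hl : HasDerivAt L (deriv L (e p)) (e (p + (0:ℝ) • Pi.single k 1)) := by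
      rw [zero_smul, add_zero]
      exact (hL.differentiable (by norm_num) _).hasDerivAt
    exact hl.scomp (0:ℝ) h2
  have h4 := line_pd (pd e k) (hP k) k p
  have h5 : HasDerivAt (fun t : ℝ => gradSq e (p + t • Pi.single k 1) + η)
      (∑ j, 2 * pd e j p * pd (pd e j) k p) 0 := by
    refine HasDerivAt.add_const η ?_
    unfold gradSq
    refine HasDerivAt.fun_sum fun j _ => ?_
    have := (line_pd (pd e j) (hP j) k p).fun_pow 2
    simpa using this
  have h6 := h5.inv (by simpa using hne)
  have h7 := (h1.mul h3).mul (h4.mul h6).ofReal_comp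
  refine h7.congr_deriv ?_
  simp only [zero_smul, add_zero, Pi.mul_apply, Pi.inv_apply, Complex.real_smul]
  push_cast
  ring

end ibp

section lemmaA

open Filter Topology

lemma abs_le_lnorm {d : ℕ} (m : Γd d) (k : Fin d) : |(m k : ℝ)| ≤ lnorm m :=
  Real.abs_le_sqrt (Finset.single_le_sum (f := fun k => ((m k : ℝ)) ^ 2)
    (fun _ _ => sq_nonneg _) (Finset.mem_univ k))

lemma abs_pd_mul_le {d : ℕ} (e : (Fin d → ℝ) → ℝ) (p : Fin d → ℝ) (k j : Fin d) :
    |pd e k p * pd e j p| ≤ gradSq e p := by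
  have h1 : |pd e k p| ≤ Real.sqrt (gradSq e p) :=
    Real.abs_le_sqrt (Finset.single_le_sum (f := fun k => pd e k p ^ 2)
      (fun _ _ => sq_nonneg _) (Finset.mem_univ k))
  have h2 : |pd e j p| ≤ Real.sqrt (gradSq e p) :=
    Real.abs_le_sqrt (Finset.single_le_sum (f := fun k => pd e k p ^ 2)
      (fun _ _ => sq_nonneg _) (Finset.mem_univ j))
  rw [abs_mul, ← Real.mul_self_sqrt (gradSq_nonneg e p)]
  exact mul_le_mul h1 h2 (abs_nonneg _) (Real.sqrt_nonneg _)

lemma deriv_bound {d : ℕ} (e : (Fin d → ℝ) → ℝ) (he : ContDiff ℝ 2 e) :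
    ∃ K : ℝ, 0 ≤ K ∧ ∀ p ∈ torusBox d, (∀ k, |pd e k p| ≤ K) ∧ ∀ k j, |pd (pd e k) j p| ≤ K := by
  have hc : Continuous fun p => (∑ k, |pd e k p|) + ∑ k, ∑ j, |pd (pd e k) j p| := by
    refine (continuous_finsetSum _ fun k _ => (contDiff_pd e he k).continuous.abs).add
      (continuous_finsetSum _ fun k _ => continuous_finsetSum _ fun j _ => ?_)
    refine Continuous.abs ?_
    exact ((contDiff_pd e he k).continuous_fderiv (by norm_num)).clm_apply continuous_const
  obtain ⟨K, hK⟩ := (isCompact_torusBox d).exists_bound_of_continuousOn hc.continuousOn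
  have h1 : ∀ p, 0 ≤ ∑ k, |pd e k p| := fun p => Finset.sum_nonneg fun _ _ => abs_nonneg _
  have h3 : ∀ p k, 0 ≤ ∑ j, |pd (pd e k) j p| := fun p k =>
    Finset.sum_nonneg fun _ _ => abs_nonneg _
  have h2 : ∀ p, 0 ≤ ∑ k, ∑ j, |pd (pd e k) j p| := fun p => Finset.sum_nonneg fun k _ => h3 p k
  refine ⟨max K 0, le_max_right _ _, fun p hp => ?_⟩
  have hKp := ((le_abs_self _).trans (hK p hp)).trans (le_max_left K 0)
  refine ⟨fun k => ?_, fun k j => ?_⟩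
  · have := Finset.single_le_sum (f := fun k => |pd e k p|) (fun _ _ => abs_nonneg _)
      (Finset.mem_univ k)
    have := h2 p
    linarith
  · have a1 := Finset.single_le_sum (f := fun j => |pd (pd e k) j p|) (fun _ _ => abs_nonneg _)
      (Finset.mem_univ j)
    have a2 := Finset.single_le_sum (f := fun k => ∑ j, |pd (pd e k) j p|) (fun k _ => h3 p k)
      (Finset.mem_univ k)
    have := h1 p
    linarith

lemma remD_bound {d : ℕ} (e : (Fin d → ℝ) → ℝ) (he : ContDiff ℝ 2 e) :
    ∃ K : ℝ, 0 ≤ K ∧ ∀ (m : Γd d) (η : ℝ), 0 < η → ∀ p ∈ torusBox d,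
      ‖remD e m η p‖ ≤ K * (1 + lnorm m) * (gradSq e p + η)⁻¹ := by
  obtain ⟨K, hK0, hK⟩ := deriv_bound e he
  refine ⟨d * (K + 2 * d * K), by positivity, fun m η hη p hp => ?_⟩
  obtain ⟨hP, hH⟩ := hK p hp
  have hb := gradSq_nonneg e p
  have hm := lnorm_nonneg m
  set s := gradSq e p + η with hs
  have hs0 : 0 < s := by positivity
  have hterm : ∀ k : Fin d, ‖(Complex.I * (m k : ℝ) * ((pd e k p * s⁻¹ : ℝ) : ℂ) +
    ((pd (pd e k) k p * s⁻¹ -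
      pd e k p * ((∑ j, 2 * pd e j p * pd (pd e j) k p) / s ^ 2) : ℝ) : ℂ))‖ ≤
      (K + 2 * d * K) * (1 + lnorm m) * s⁻¹ := by
    intro k
    have hA : ‖Complex.I * (m k : ℝ) * ((pd e k p * s⁻¹ : ℝ) : ℂ)‖ ≤ lnorm m * (K * s⁻¹) := by
      rw [norm_mul, norm_mul, Complex.norm_I, one_mul, Complex.norm_real, Complex.norm_real,
        Real.norm_eq_abs, Real.norm_eq_abs, abs_mul, abs_of_pos (inv_pos.2 hs0)]
      have := abs_le_lnorm m k
      have := hP k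
      gcongr
    have hB : |pd (pd e k) k p * s⁻¹| ≤ K * s⁻¹ := by
      rw [abs_mul, abs_of_pos (inv_pos.2 hs0)]
      have := hH k k
      gcongr
    have hC : |pd e k p * ((∑ j, 2 * pd e j p * pd (pd e j) k p) / s ^ 2)| ≤
        2 * d * K * s⁻¹ := by
      have e1 : pd e k p * ((∑ j, 2 * pd e j p * pd (pd e j) k p) / s ^ 2) =
          (∑ j, 2 * (pd e k p * pd e j p) * pd (pd e j) k p) / s ^ 2 := by
        rw [← mul_div_assoc, Finset.mul_sum]
        congr 1
        exact Finset.sum_congr rfl fun j _ => by ring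
      have e2 : |∑ j, 2 * (pd e k p * pd e j p) * pd (pd e j) k p| ≤ d * (2 * s * K) := by
        refine (Finset.abs_sum_le_sum_abs _ _).trans ?_
        have : ∀ j ∈ Finset.univ, |2 * (pd e k p * pd e j p) * pd (pd e j) k p| ≤ 2 * s * K := by
          intro j _
          rw [abs_mul, abs_mul, abs_two]
          have h1 : |pd e k p * pd e j p| ≤ s :=
            (abs_pd_mul_le e p k j).trans (by rw [hs]; linarith)
          have h2 := hH j k
          gcongr
        refine (Finset.sum_le_sum this).trans (le_of_eq ?_)
        simp
      rw [e1, abs_div, abs_of_pos (by positivity : 0 < s ^ 2), div_le_iff₀ (by positivity)]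
      refine e2.trans (le_of_eq ?_)
      field_simp
    refine (norm_add_le _ _).trans ?_
    rw [Complex.norm_real, Real.norm_eq_abs]
    have hBC := (abs_sub (pd (pd e k) k p * s⁻¹)
      (pd e k p * ((∑ j, 2 * pd e j p * pd (pd e j) k p) / s ^ 2)))
    have hsi : 0 < s⁻¹ := inv_pos.2 hs0
    have : 0 ≤ 2 * d * K * (lnorm m * s⁻¹) := by positivity
    have : (K + 2 * d * K) * (1 + lnorm m) * s⁻¹ = K * s⁻¹ + 2 * d * K * s⁻¹ +
      lnorm m * (K * s⁻¹) + 2 * d * K * (lnorm m * s⁻¹) := by ring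
    linarith
  unfold remD
  refine (norm_sum_le _ _).trans ((Finset.sum_le_sum fun k _ => hterm k).trans (le_of_eq ?_))
  simp
  ring

lemma continuous_remD {d : ℕ} (e : (Fin d → ℝ) → ℝ) (he : ContDiff ℝ 2 e) (m : Γd d) (η : ℝ)
    (hη : 0 < η) : Continuous (remD e m η) := by
  have h1 : ∀ k, Continuous (pd e k) := fun k => (contDiff_pd e he k).continuous
  have h2 : ∀ k j, Continuous (pd (pd e k) j) := fun k j =>
    ((contDiff_pd e he k).continuous_fderiv (by norm_num)).clm_apply continuous_const
  have h3 := continuous_gradSq e he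
  have h4 : ∀ p, gradSq e p + η ≠ 0 := fun p => by
    have := gradSq_nonneg e p
    positivity
  have h5 : ∀ p, (gradSq e p + η) ^ 2 ≠ 0 := fun p => pow_ne_zero _ (h4 p)
  unfold remD
  refine continuous_finsetSum _ fun k _ => ?_
  have h6 : Continuous fun p => ∑ j, 2 * pd e j p * pd (pd e j) k p :=
    continuous_finsetSum _ fun j _ => (continuous_const.mul (h1 j)).mul (h2 j k)
  have h7 := (h3.add continuous_const).inv₀ h4
  have h8 := h6.div ((h3.add (continuous_const (y := η))).pow 2) h5
  exact (continuous_const.mul (Complex.continuous_ofReal.comp ((h1 k).mul h7))).add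
    (Complex.continuous_ofReal.comp (((h2 k k).mul h7).sub ((h1 k).mul h8)))

lemma lemmaA {n : ℕ} (hd : 3 ≤ n + 1) (e : (Fin (n+1) → ℝ) → ℝ) (he : ContDiff ℝ 2 e)
    (hper : Periodic2pi e) (hM : IsMorse e) :
    ∃ K : ℝ, 0 ≤ K ∧ ∀ (L : ℝ → ℂ), ContDiff ℝ 1 L → ∀ (m : Γd (n+1))
      (g : (Fin (n+1) → ℝ) → ℝ), IntegrableOn g (torusBox (n+1)) →
      (∀ p ∈ torusBox (n+1), ‖L (e p)‖ * (gradSq e p)⁻¹ ≤ g p) →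
      ‖∫ p in torusBox (n+1), chr m p * deriv L (e p)‖ ≤
        K * (1 + lnorm m) * ∫ p in torusBox (n+1), g p := by
  obtain ⟨K, hK0, hK⟩ := remD_bound e he
  refine ⟨K, hK0, fun L hL m g hg hLg => ?_⟩
  have hm := lnorm_nonneg m
  have hbc := continuous_gradSq e he
  have hchr := (contDiff_chr m).continuous
  have hLe : Continuous fun p => L (e p) := hL.continuous.comp he.continuous
  have hLe' : Continuous fun p => deriv L (e p) :=
    (hL.continuous_deriv (by norm_num)).comp he.continuous
  have hpos : ∀ᵐ p ∂(volume.restrict (torusBox (n+1))), 0 < gradSq e p :=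
    ae_restrict_of_ae (crit_null hd e he hM)
  have hmem : ∀ᵐ p ∂(volume.restrict (torusBox (n+1))), p ∈ torusBox (n+1) :=
    ae_restrict_mem (measurableSet_torusBox _)
  have hfrac : ∀ η : ℝ, 0 < η → Continuous fun p =>
      ((gradSq e p * (gradSq e p + η)⁻¹ : ℝ) : ℂ) := fun η hη =>
    Complex.continuous_ofReal.comp (hbc.mul ((hbc.add continuous_const).inv₀ fun p =>
      ne_of_gt (add_pos_of_nonneg_of_pos (gradSq_nonneg e p) hη)))
  have key : ∀ η : ℝ, 0 < η → ‖∫ p in torusBox (n+1),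
      chr m p * deriv L (e p) * ((gradSq e p * (gradSq e p + η)⁻¹ : ℝ) : ℂ)‖ ≤
      K * (1 + lnorm m) * ∫ p in torusBox (n+1), g p := by
    intro η hη
    have h0 := div_int_zero (vf e L m η) (fun i => contDiff_vf e he L hL m η hη i)
      (fun i p a => by
        simp only [vf, chr_periodic, pd_periodic e hper, gradSq_periodic e hper, hper p a])
    have h1 : ∀ p, ∑ i, fderiv ℝ (vf e L m η i) p (Pi.single i 1) =
        chr m p * deriv L (e p) * ((gradSq e p * (gradSq e p + η)⁻¹ : ℝ) : ℂ) +
        chr m p * L (e p) * remD e m η p := by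
      intro p
      simp only [fderiv_vf e he L hL m η hη, Finset.sum_add_distrib]
      rw [← Finset.mul_sum, ← Finset.mul_sum, ← Complex.ofReal_sum, ← Finset.sum_mul]
      rw [remD, gradSq, Finset.sum_add_distrib]
    simp only [h1] at h0
    have hc1 : Continuous fun p => chr m p * deriv L (e p) *
        ((gradSq e p * (gradSq e p + η)⁻¹ : ℝ) : ℂ) := (hchr.mul hLe').mul (hfrac η hη)
    have hc2 : Continuous fun p => chr m p * L (e p) * remD e m η p :=
      (hchr.mul hLe).mul (continuous_remD e he m η hη)
    rw [integral_add (hc1.continuousOn.integrableOn_compact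
      (isCompact_torusBox _)) (hc2.continuousOn.integrableOn_compact (isCompact_torusBox _))] at h0
    rw [eq_neg_of_add_eq_zero_left h0, norm_neg, ← integral_const_mul]
    refine norm_integral_le_of_norm_le (hg.const_mul _) ?_
    filter_upwards [hpos, hmem] with p hp hpm
    rw [norm_mul, norm_mul, norm_chr, one_mul]
    calc ‖L (e p)‖ * ‖remD e m η p‖
        ≤ ‖L (e p)‖ * (K * (1 + lnorm m) * (gradSq e p + η)⁻¹) := by
          gcongr; exact hK m η hη p hpm
      _ ≤ ‖L (e p)‖ * (K * (1 + lnorm m) * (gradSq e p)⁻¹) := by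
          gcongr; linarith
      _ = K * (1 + lnorm m) * (‖L (e p)‖ * (gradSq e p)⁻¹) := by ring
      _ ≤ K * (1 + lnorm m) * g p := by
          gcongr; exact hLg p hpm
  have hlim : Tendsto (fun N : ℕ => ∫ p in torusBox (n+1),
      chr m p * deriv L (e p) * ((gradSq e p * (gradSq e p + 1 / ((N : ℝ) + 1))⁻¹ : ℝ) : ℂ)) atTop
      (𝓝 (∫ p in torusBox (n+1), chr m p * deriv L (e p))) := by
    refine tendsto_integral_of_dominated_convergence (fun p => ‖deriv L (e p)‖) ?_ ?_ ?_ ?_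
    · intro N
      exact ((hchr.mul hLe').mul (hfrac _ (by positivity))).aestronglyMeasurable
    · exact hLe'.norm.continuousOn.integrableOn_compact (isCompact_torusBox _)
    · intro N
      refine Eventually.of_forall fun p => ?_
      rw [norm_mul, norm_mul, norm_chr, one_mul, Complex.norm_real]
      have hb := gradSq_nonneg e p
      have hN : 0 < 1 / ((N : ℝ) + 1) := by positivity
      rw [Real.norm_of_nonneg (by positivity)]
      refine mul_le_of_le_one_right (norm_nonneg _) ?_
      rw [← div_eq_mul_inv, div_le_one (by positivity)]
      linarith
    · filter_upwards [hpos] with p hp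
      have h1 : Tendsto (fun N : ℕ => gradSq e p * (gradSq e p + 1 / ((N : ℝ) + 1))⁻¹) atTop
          (𝓝 (gradSq e p * (gradSq e p + 0)⁻¹)) :=
        tendsto_const_nhds.mul (((tendsto_const_nhds).add
          tendsto_one_div_add_atTop_nhds_zero_nat).inv₀ (by simpa using hp.ne'))
      rw [add_zero, mul_inv_cancel₀ hp.ne'] at h1
      have h2 := (Complex.continuous_ofReal.tendsto _).comp h1
      have h3 := (tendsto_const_nhds (x := chr m p * deriv L (e p))).mul h2
      simpa using h3
  refine le_of_tendsto hlim.norm (Eventually.of_forall fun N => ?_)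
  exact key _ (by positivity)

end lemmaA

section greens

open Filter Topology

lemma slit_of_im {z : ℂ} (hz : z.im ≠ 0) (t : ℝ) : z - (t : ℂ) ∈ Complex.slitPlane := by
  right
  simpa using hz

lemma hasDerivAt_logz {z : ℂ} (hz : z.im ≠ 0) (t : ℝ) :
    HasDerivAt (fun t : ℝ => Complex.log (z - (t : ℂ))) (-(z - (t : ℂ))⁻¹) t := by
  have h1 : HasDerivAt (fun t : ℝ => z - (t : ℂ)) (-1) t := by
    simpa using (Complex.ofRealCLM.hasDerivAt (x := t)).const_sub z
  have := h1.clog_real (slit_of_im hz t)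
  refine this.congr_deriv ?_
  rw [div_eq_mul_inv]; ring

lemma contDiff_logz {z : ℂ} (hz : z.im ≠ 0) :
    ContDiff ℝ 1 (fun t : ℝ => Complex.log (z - (t : ℂ))) := by
  rw [contDiff_one_iff_deriv]
  refine ⟨fun t => (hasDerivAt_logz hz t).differentiableAt, ?_⟩
  rw [show deriv (fun t : ℝ => Complex.log (z - (t : ℂ))) = fun t : ℝ => -(z - (t : ℂ))⁻¹ from
    funext fun t => (hasDerivAt_logz hz t).deriv]
  exact ((continuous_const.sub Complex.continuous_ofReal).inv₀
    fun t => Complex.slitPlane_ne_zero (slit_of_im hz t)).neg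

lemma norm_exp_log (c : ℝ) {w : ℂ} (hw : w ≠ 0) :
    ‖Complex.exp ((c : ℂ) * Complex.log w)‖ = ‖w‖ ^ c := by
  rw [Complex.norm_exp, Complex.re_ofReal_mul, Complex.log_re,
    Real.rpow_def_of_pos (norm_pos_iff.2 hw), mul_comm]

lemma re_exp_log {w : ℂ} (hw : w ≠ 0) :
    ‖w‖ ^ (-(1/3) : ℝ) / 2 ≤ (Complex.exp (((-(1/3) : ℝ) : ℂ) * Complex.log w)).re := by
  rw [Complex.exp_re, Complex.re_ofReal_mul, Complex.im_ofReal_mul, Complex.log_re, Complex.log_im,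
    mul_comm (-(1/3) : ℝ) (Real.log ‖w‖), ← Real.rpow_def_of_pos (norm_pos_iff.2 hw)]
  have h1 := Complex.abs_arg_le_pi w
  have h2 : 1 / 2 ≤ Real.cos (-(1/3) * Complex.arg w) := by
    rw [← Real.cos_pi_div_three, ← Real.cos_abs (-(1/3) * Complex.arg w)]
    refine Real.cos_le_cos_of_nonneg_of_le_pi (abs_nonneg _) (by linarith [Real.pi_pos]) ?_
    rw [abs_mul, abs_of_neg (by norm_num : (-(1/3) : ℝ) < 0)]
    linarith
  have h3 : 0 ≤ ‖w‖ ^ (-(1/3) : ℝ) := by positivity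
  nlinarith

lemma inv_le_one_add_rpow {b : ℝ} (hb : 0 ≤ b) : b⁻¹ ≤ 1 + b ^ (-(4/3) : ℝ) := by
  have h0 : 0 ≤ b ^ (-(4/3) : ℝ) := by positivity
  rcases hb.eq_or_lt with rfl | hb'
  · simp only [inv_zero]; linarith
  rcases le_total 1 b with h | h
  · have := inv_le_one_of_one_le₀ h
    linarith
  · have := Real.rpow_le_rpow_of_exponent_ge hb' h (by norm_num : (-(4/3) : ℝ) ≤ -1)
    rw [Real.rpow_neg_one] at this
    linarith

lemma young_aux {r b : ℝ} (hr : 0 < r) (hb : 0 ≤ b) :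
    r ^ (-(1/12) : ℝ) * b⁻¹ ≤ r ^ (-(1/3) : ℝ) + b ^ (-(4/3) : ℝ) := by
  have hpq : Real.HolderConjugate 4 (4/3) := by
    rw [Real.holderConjugate_iff]; norm_num
  have h := Real.young_inequality_of_nonneg (a := r ^ (-(1/12) : ℝ)) (b := b⁻¹)
    (by positivity) (by positivity) hpq
  rw [← Real.rpow_mul hr.le, Real.inv_rpow hb, ← Real.rpow_neg hb] at h
  norm_num at h
  norm_num
  have h1 : 0 ≤ r ^ (-(1/3) : ℝ) := by positivity
  have h2 : 0 ≤ b ^ (-(4/3) : ℝ) := by positivity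
  norm_num at h1 h2
  linarith

lemma log_bound {T : ℝ} (hT : 1 ≤ T) {w : ℂ} (hw : w ≠ 0) (hwT : ‖w‖ ≤ T) :
    ‖Complex.log w‖ ≤ (12 + (T + π) * T ^ (1/12 : ℝ)) * ‖w‖ ^ (-(1/12) : ℝ) := by
  have hr : 0 < ‖w‖ := norm_pos_iff.2 hw
  set r := ‖w‖ with hrdef
  have h1 : ‖Complex.log w‖ ≤ |Real.log r| + π := by
    have := Complex.norm_le_abs_re_add_abs_im (Complex.log w)
    rw [Complex.log_re, Complex.log_im] at this
    linarith [Complex.abs_arg_le_pi w]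
  have h2 : -Real.log r ≤ 12 * r ^ (-(1/12) : ℝ) := by
    have := Real.log_le_rpow_div (x := r⁻¹) (by positivity) (by norm_num : (0:ℝ) < 1/12)
    rw [Real.log_inv, Real.inv_rpow hr.le, ← Real.rpow_neg hr.le] at this
    linarith
  have h3 : Real.log r ≤ T := (Real.log_le_sub_one_of_pos hr).trans (by linarith)
  have h4 : 1 ≤ T ^ (1/12 : ℝ) * r ^ (-(1/12) : ℝ) := by
    rw [Real.rpow_neg hr.le, ← div_eq_mul_inv, one_le_div (by positivity)]
    exact Real.rpow_le_rpow hr.le hwT (by norm_num)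
  have h5 : 0 ≤ r ^ (-(1/12) : ℝ) := by positivity
  have h6 : T + π ≤ (T + π) * (T ^ (1/12 : ℝ) * r ^ (-(1/12) : ℝ)) :=
    le_mul_of_one_le_right (by positivity) h4
  have h7 : |Real.log r| ≤ 12 * r ^ (-(1/12) : ℝ) + T := by
    rw [abs_le]; constructor <;> linarith
  calc _ ≤ |Real.log r| + π := h1
    _ ≤ 12 * r ^ (-(1/12) : ℝ) + (T + π) := by linarith
    _ ≤ 12 * r ^ (-(1/12) : ℝ) + (T + π) * (T ^ (1/12 : ℝ) * r ^ (-(1/12) : ℝ)) := by linarith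
    _ = _ := by ring

lemma chr_zero {d : ℕ} (p : Fin d → ℝ) : chr 0 p = 1 := by simp [chr, dotZ]

lemma green_bound {n : ℕ} (hd : 3 ≤ n + 1) (e : (Fin (n+1) → ℝ) → ℝ) (he : ContDiff ℝ 2 e)
    (hper : Periodic2pi e) (hM : IsMorse e) :
    ∃ C : ℝ, 0 < C ∧ ∀ z : ℂ, z.im ≠ 0 → ∀ m : Γd (n+1),
      ‖∫ p in torusBox (n+1), chr m p * (z - e p)⁻¹‖ ≤ C * (1 + lnorm m) := by
  obtain ⟨K, hK0, hK⟩ := lemmaA hd e he hper hM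
  obtain ⟨M', hM'⟩ := (isCompact_torusBox (n+1)).exists_bound_of_continuousOn
    he.continuous.continuousOn
  obtain ⟨M, hM0, hMb⟩ : ∃ M : ℝ, 0 ≤ M ∧ ∀ p ∈ torusBox (n+1), ‖e p‖ ≤ M :=
    ⟨max M' 0, le_max_right _ _, fun p hp => (hM' p hp).trans (le_max_left _ _)⟩
  set B := torusBox (n+1) with hB
  have hBc : IsCompact B := isCompact_torusBox _
  have hmem : ∀ᵐ p ∂(volume.restrict B), p ∈ B := ae_restrict_mem (measurableSet_torusBox _)
  have hIntg : IntegrableOn (fun p => gradSq e p ^ (-(4/3) : ℝ)) B :=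
    (locInt hd e he hM).integrableOn_isCompact hBc
  set J := ∫ p in B, gradSq e p ^ (-(4/3) : ℝ) with hJ
  have hJ0 : 0 ≤ J := integral_nonneg fun p => by
    have := gradSq_nonneg e p
    positivity
  have hone : IntegrableOn (fun _ : Fin (n+1) → ℝ => (1:ℝ)) B :=
    continuous_const.continuousOn.integrableOn_compact hBc
  set v := ∫ _p in B, (1:ℝ) with hv
  have hv0 : 0 ≤ v := integral_nonneg fun p => zero_le_one
  set T := 2 * M + 1 with hT
  have hT1 : 1 ≤ T := by linarith
  -- step 1
  have step1 : ∀ z : ℂ, z.im ≠ 0 → ‖z‖ ≤ M + 1 →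
      ∫ p in B, ‖z - e p‖ ^ (-(1/3) : ℝ) ≤ 2 * (K * ((3/2) * T ^ (2/3 : ℝ) * (v + J))) := by
    intro z hz hzM
    have hne : ∀ t : ℝ, z - (t : ℂ) ≠ 0 := fun t => Complex.slitPlane_ne_zero (slit_of_im hz t)
    set L : ℝ → ℂ := fun t => -(3/2 : ℂ) *
      Complex.exp (((2/3 : ℝ) : ℂ) * Complex.log (z - (t : ℂ))) with hLdef
    have hL : ContDiff ℝ 1 L := contDiff_const.mul (contDiff_const.mul (contDiff_logz hz)).cexp
    have hL' : ∀ t : ℝ, deriv L t =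
        Complex.exp (((-(1/3) : ℝ) : ℂ) * Complex.log (z - (t : ℂ))) := by
      intro t
      have h1 := ((((hasDerivAt_logz hz t).const_mul ((2/3 : ℝ) : ℂ)).cexp).const_mul (-(3/2 : ℂ)))
      rw [h1.deriv]
      have h2 : Complex.exp (((2/3 : ℝ) : ℂ) * Complex.log (z - (t : ℂ))) =
          Complex.exp (((-(1/3) : ℝ) : ℂ) * Complex.log (z - (t : ℂ))) * (z - (t : ℂ)) := by
        conv_rhs => rw [← Complex.exp_log (hne t)]
        rw [Complex.log_exp (by linarith [Complex.neg_pi_lt_log_im (z - (t:ℂ))])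
          (Complex.log_im_le_pi _), ← Complex.exp_add]
        congr 1
        push_cast; ring
      rw [h2]
      have := hne t
      push_cast
      field_simp
    have hg : IntegrableOn (fun p => (3/2) * T ^ (2/3 : ℝ) *
        (1 + gradSq e p ^ (-(4/3) : ℝ))) B := (hone.add hIntg).const_mul _
    have hA := hK L hL 0 _ hg (fun p hp => by
      rw [hLdef]
      simp only
      rw [norm_mul, norm_exp_log _ (hne _)]
      have h1 : ‖z - e p‖ ≤ T := by
        refine (norm_sub_le _ _).trans ?_
        rw [Complex.norm_real]
        have := hMb p hp
        linarith
      have h2 : ‖(-(3/2) : ℂ)‖ = 3/2 := by norm_num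
      rw [h2]
      have h3 := inv_le_one_add_rpow (gradSq_nonneg e p)
      have h4 := gradSq_nonneg e p
      gcongr)
    simp only [chr_zero, one_mul, hL'] at hA
    rw [integral_const_mul, integral_add hone hIntg, ← hv, ← hJ] at hA
    have hl0 : lnorm (0 : Γd (n+1)) = 0 := by simp [lnorm]
    rw [hl0, add_zero, mul_one] at hA
    have hce : Continuous fun p => Complex.exp (((-(1/3) : ℝ) : ℂ) * Complex.log (z - (e p : ℂ))) :=
      (continuous_const.mul ((contDiff_logz hz).continuous.comp he.continuous)).cexp
    have hI := hce.continuousOn.integrableOn_compact (μ := volume) hBc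
    have hcn : Continuous fun p => ‖z - (e p : ℂ)‖ ^ (-(1/3) : ℝ) :=
      ((continuous_const.sub (Complex.continuous_ofReal.comp he.continuous)).norm).rpow_const
        fun p => Or.inl (norm_ne_zero_iff.2 (hne _))
    have hre : (∫ p in B, ‖z - e p‖ ^ (-(1/3) : ℝ)) / 2 ≤
        (∫ p in B, Complex.exp (((-(1/3) : ℝ) : ℂ) * Complex.log (z - (e p : ℂ)))).re := by
      have h5 := integral_re (𝕜 := ℂ) hI
      simp only [RCLike.re_to_complex] at h5
      rw [← h5, ← integral_div]
      refine integral_mono ((hcn.continuousOn.integrableOn_compact hBc).div_const 2) hI.re ?_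
      intro p
      exact re_exp_log (hne _)
    have := (Complex.re_le_norm _).trans hA
    linarith
  -- step 2
  set c := 12 + (T + π) * T ^ (1/12 : ℝ) with hc
  have hc0 : 0 ≤ c := by positivity
  set K₂ := 2 * (K * ((3/2) * T ^ (2/3 : ℝ) * (v + J))) with hK₂
  have hK₂0 : 0 ≤ K₂ := by positivity
  refine ⟨K * (c * (K₂ + J)) + v + 1, by positivity, fun z hz m => ?_⟩
  have hm := lnorm_nonneg m
  have hne : ∀ t : ℝ, z - (t : ℂ) ≠ 0 := fun t => Complex.slitPlane_ne_zero (slit_of_im hz t)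
  rcases le_or_gt ‖z‖ (M + 1) with hzM | hzM
  · have hcn : Continuous fun p => ‖z - (e p : ℂ)‖ ^ (-(1/3) : ℝ) :=
      ((continuous_const.sub (Complex.continuous_ofReal.comp he.continuous)).norm).rpow_const
        fun p => Or.inl (norm_ne_zero_iff.2 (hne _))
    have hIn := hcn.continuousOn.integrableOn_compact (μ := volume) hBc
    have hL : ContDiff ℝ 1 fun t : ℝ => -Complex.log (z - (t : ℂ)) := (contDiff_logz hz).neg
    have hL' : ∀ t : ℝ, deriv (fun t : ℝ => -Complex.log (z - (t : ℂ))) t = (z - (t : ℂ))⁻¹ := by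
      intro t
      rw [(hasDerivAt_logz hz t).fun_neg.deriv, neg_neg]
    have hg : IntegrableOn (fun p => c * (‖z - (e p : ℂ)‖ ^ (-(1/3) : ℝ) +
        gradSq e p ^ (-(4/3) : ℝ))) B := (hIn.add hIntg).const_mul _
    have hA := hK _ hL m _ hg (fun p hp => by
      rw [norm_neg]
      have h1 : ‖z - e p‖ ≤ T := by
        refine (norm_sub_le _ _).trans ?_
        rw [Complex.norm_real]
        have := hMb p hp
        linarith
      have h2 := log_bound hT1 (hne (e p)) h1
      have h3 := young_aux (norm_pos_iff.2 (hne (e p))) (gradSq_nonneg e p)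
      have h4 := gradSq_nonneg e p
      calc _ ≤ (c * ‖z - e p‖ ^ (-(1/12) : ℝ)) * (gradSq e p)⁻¹ := by gcongr
        _ = c * (‖z - e p‖ ^ (-(1/12) : ℝ) * (gradSq e p)⁻¹) := by ring
        _ ≤ _ := by gcongr)
    simp only [hL'] at hA
    rw [integral_const_mul, integral_add hIn hIntg, ← hJ] at hA
    have h1 := step1 z hz hzM
    refine hA.trans ?_
    have h2 : K * (1 + lnorm m) * (c * ((∫ p in B, ‖z - e p‖ ^ (-(1/3) : ℝ)) + J)) ≤
        K * (1 + lnorm m) * (c * (K₂ + J)) := by gcongr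
    have h3 : 0 ≤ (v + 1) * (1 + lnorm m) := by positivity
    refine h2.trans ?_
    have h4 : (K * (c * (K₂ + J)) + v + 1) * (1 + lnorm m) =
      K * (1 + lnorm m) * (c * (K₂ + J)) + (v + 1) * (1 + lnorm m) := by ring
    linarith
  · have h1 : ‖∫ p in B, chr m p * (z - e p)⁻¹‖ ≤ v := by
      refine norm_integral_le_of_norm_le hone ?_
      filter_upwards [hmem] with p hp
      rw [norm_mul, norm_chr, one_mul, norm_inv]
      refine inv_le_one_of_one_le₀ ?_
      have h2 := norm_sub_norm_le z (e p : ℂ)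
      rw [Complex.norm_real] at h2
      have := hMb p hp
      linarith
    refine h1.trans ?_
    have h2 : 0 ≤ K * (c * (K₂ + J)) := by positivity
    nlinarith

end greens

lemma green_fc {d : ℕ} (hd : 3 ≤ d) (e : (Fin d → ℝ) → ℝ) (he : ContDiff ℝ 2 e)
    (hper : Periodic2pi e) (hM : IsMorse e) :
    ∃ C : ℝ, 0 < C ∧ ∀ z : ℂ, z.im ≠ 0 → ∀ m : Γd d,
      ‖fc (fun p => (z - e p)⁻¹) m‖ ≤ C * (1 + lnorm m) ^ 2 := by
  obtain ⟨n, rfl⟩ : ∃ n, d = n + 1 := ⟨d - 1, by omega⟩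
  obtain ⟨C, hC, hb⟩ := green_bound hd e he hper hM
  refine ⟨(1 / (2 * π) ^ (n+1)) * C, by positivity, fun z hz m => ?_⟩
  have hm := lnorm_nonneg m
  have h1 : (1 + lnorm m) ≤ (1 + lnorm m) ^ 2 := by nlinarith
  have h2 : fc (fun p => (z - e p)⁻¹) m = ((1 / (2 * π) ^ (n+1) : ℝ) : ℂ) *
      ∫ p in torusBox (n+1), chr m p * (z - e p)⁻¹ := by
    unfold fc chr
    congr 1
    congr 1
    funext p
    exact mul_comm _ _
  rw [h2, norm_mul, Complex.norm_real, Real.norm_of_nonneg (by positivity), mul_assoc]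
  gcongr
  refine (hb z hz m).trans ?_
  gcongr

/-- Limiting absorption principle for `H(𝔢,V)`.
There is `c(𝔢) > 0` such that if `Φ_{2,2}(V) < c(𝔢)` then there is `c' < ∞` with
`|⟨δ_x, (z - H(𝔢,V))⁻¹ δ_y⟩| ≤ c' (1+|x|)² (1+|y|)²` for all nonreal `z` and all
`x, y ∈ Γ`. -/
theorem statement11 (d : ℕ) (hd : 3 ≤ d)
    (e : (Fin d → ℝ) → ℝ) (he : IsDispersion e) (heC3 : ContDiff ℝ 3 e) (heM : CondM e) :
    ∃ c : ℝ, 0 < c ∧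
      ∀ (V : Γd d → ℝ) (Hop Mv : L2 d →L[ℂ] L2 d),
        IsMultiplier e Hop → IsMulOp V Mv →
        Phi 2 2 V < ENNReal.ofReal c →
        ∃ c' : ℝ, ∀ z : ℂ, z.im ≠ 0 → ∀ R : L2 d →L[ℂ] L2 d,
          IsResolventAt (Hop + Mv) z R →
          ∀ x y : Γd d,
            ‖(⟪delta x, R (delta y)⟫ : ℂ)‖ ≤ c' * (1 + lnorm x) ^ 2 * (1 + lnorm y) ^ 2 := by
  have he2 : ContDiff ℝ 2 e := heC3.of_le (by norm_num)
  obtain ⟨C, hC, hG⟩ := green_fc hd e he2 he.1 heM.1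
  refine ⟨1 / (2 * C), by positivity, fun V Hop Mv hH hMv hV => ⟨2 * C, fun z hz R hR x y => ?_⟩⟩
  exact main_of_bound e he2.continuous C hC hG V Hop Mv hH hMv hV z hz R hR x y


end LatSch
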